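/- arXiv:math/0610515 — 3 statements merged into one kernel-verified Lean document; each statement's English description precedes it below -/
import Mathlib

section
/- Let {S_k; k ≥ 1} be a nondecreasing sequence of positive random variables with μ > 0 such that sup_n E|S_n − nμ|/√n < ∞. Then max_{k ≥ k_0} |S_k/(kμ) − 1| converges to 0 in probability as k_0 → ∞, and consequently S_k/(kμ) → 1 almost surely as k → ∞. -/
open MeasureTheory Filter

/-!
Along a sufficiently sparse power sequence `n ^ d`, the `L¹` norms of `S_{n ^ d} / n ^ d - μ` are
summable, so these differences tend to `0` almost surely. The ratio of consecutive powers tends to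
`1`, so monotonicity of `S` carries the convergence over to the full sequence. On a finite measure
space almost sure convergence makes the probabilities of the decreasing tail
events `{∃ k ≥ k₀, |S_k / (kμ) - 1| > δ}` tend to the probability of their intersection,
a null event.
-/

theorem tendsto_div_of_monotone_of_tendsto_div_pow {u : ℕ → ℝ} {l : ℝ} {d : ℕ} (hd : d ≠ 0)
    (hu : Monotone u) (hlim : Tendsto (fun n : ℕ => u (n ^ d) / (n : ℝ) ^ d) atTop (nhds l)) :
    Tendsto (fun n : ℕ => u n / n) atTop (nhds l) := by
  have hratio : Tendsto (fun n : ℕ => (1 + 1 / (n : ℝ)) ^ d) atTop (nhds 1) := by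
    simpa using ((tendsto_one_div_atTop_nhds_zero_nat (𝕜 := ℝ)).const_add 1).pow d
  refine tendsto_div_of_monotone_of_exists_subseq_tendsto_div u l hu fun a ha =>
    ⟨fun n => n ^ d, ?_, tendsto_pow_atTop hd, by simpa only [Nat.cast_pow] using hlim⟩
  filter_upwards [hratio.eventually_le_const ha, eventually_ne_atTop 0] with n hn hn0
  have hn0' : (n : ℝ) ≠ 0 := Nat.cast_ne_zero.mpr hn0
  calc (((n + 1) ^ d : ℕ) : ℝ) = (1 + 1 / (n : ℝ)) ^ d * (n : ℝ) ^ d := by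
        rw [← mul_pow, add_mul, one_div_mul_cancel hn0', one_mul]
        push_cast
        rfl
    _ ≤ a * (n ^ d : ℕ) := by
        push_cast
        gcongr

section AlmostEverywhere

variable {Ω : Type*} {mΩ : MeasurableSpace Ω} {P : Measure Ω}

theorem ae_tendsto_pow_zero_of_eLpNorm_le_rpow {E : Type*} [NormedAddCommGroup E]
    {X : ℕ → Ω → E} {p : ENNReal} {C r : ℝ} {d : ℕ} (hp : 1 ≤ p) (hr : d * r < -1)
    (hX : ∀ n, 1 ≤ n → AEStronglyMeasurable (X n) P)
    (hC : ∀ n : ℕ, 1 ≤ n → eLpNorm (X n) p P ≤ ENNReal.ofReal (C * (n : ℝ) ^ r)) :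
    ∀ᵐ ω ∂P, Tendsto (fun n : ℕ => X (n ^ d) ω) atTop (nhds 0) := by
  have hone_le (n : ℕ) : 1 ≤ (n + 1) ^ d := Nat.one_le_pow _ _ n.succ_pos
  have hsummable : Summable fun n : ℕ => C * ((n + 1 : ℕ) : ℝ) ^ (d * r) :=
    ((summable_nat_add_iff 1).mpr (Real.summable_nat_rpow.mpr hr)).mul_left C
  have hbound (n : ℕ) : eLpNorm (X ((n + 1) ^ d)) p P ≤
      ENNReal.ofReal (C * ((n + 1 : ℕ) : ℝ) ^ (d * r)) := by
    rw [Real.rpow_mul (Nat.cast_nonneg _), Real.rpow_natCast, ← Nat.cast_pow]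
    exact hC _ (hone_le n)
  have hfinite : ∑' n : ℕ, eLpNorm (X ((n + 1) ^ d)) p P ≠ ⊤ :=
    ne_top_of_le_ne_top hsummable.tsum_ofReal_ne_top (ENNReal.tsum_le_tsum hbound)
  filter_upwards [summable_norm_of_tsum_eLpNorm_ne_top hp (fun n => hX _ (hone_le n)) hfinite]
    with ω hω
  exact (tendsto_add_atTop_iff_nat 1).mp
    (tendsto_zero_iff_norm_tendsto_zero.mpr hω.tendsto_atTop_zero)

theorem eLpNorm_div_natCast_sub_le_rpow {f : Ω → ℝ} {p : ENNReal} {μ C θ : ℝ} {n : ℕ} (hn : 1 ≤ n)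
    (hC : eLpNorm (fun ω => f ω - n * μ) p P ≤ ENNReal.ofReal (C * (n : ℝ) ^ θ)) :
    eLpNorm (fun ω => f ω / n - μ) p P ≤ ENNReal.ofReal (C * (n : ℝ) ^ (θ - 1)) := by
  have hn0 : (0 : ℝ) < n := Nat.cast_pos.mpr hn
  have hscale : (fun ω => f ω / n - μ) = (n : ℝ)⁻¹ • fun ω => f ω - n * μ := by
    ext ω
    simp only [Pi.smul_apply, smul_eq_mul]
    field_simp
  calc eLpNorm (fun ω => f ω / n - μ) p P
      = ENNReal.ofReal (n : ℝ)⁻¹ * eLpNorm (fun ω => f ω - n * μ) p P := by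
        rw [hscale, eLpNorm_const_smul, Real.enorm_of_nonneg (by positivity)]
    _ ≤ ENNReal.ofReal (n : ℝ)⁻¹ * ENNReal.ofReal (C * (n : ℝ) ^ θ) := by gcongr
    _ = ENNReal.ofReal (C * (n : ℝ) ^ (θ - 1)) := by
        rw [← ENNReal.ofReal_mul (by positivity), Real.rpow_sub_one hn0.ne']
        congr 1
        ring

theorem ae_tendsto_div_natCast_of_monotone_of_eLpNorm_le_rpow {S : ℕ → Ω → ℝ} {p : ENNReal}
    {μ C θ : ℝ} (hp : 1 ≤ p) (hθ : θ < 1) (hmono : ∀ᵐ ω ∂P, Monotone fun k => S k ω)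
    (hS : ∀ n, 1 ≤ n → AEStronglyMeasurable (S n) P)
    (hC : ∀ n : ℕ, 1 ≤ n →
      eLpNorm (fun ω => S n ω - n * μ) p P ≤ ENNReal.ofReal (C * (n : ℝ) ^ θ)) :
    ∀ᵐ ω ∂P, Tendsto (fun n : ℕ => S n ω / n) atTop (nhds μ) := by
  have hθ' : 0 < 1 - θ := sub_pos.mpr hθ
  obtain ⟨d, hd⟩ := exists_nat_gt (1 / (1 - θ))
  have hd0 : d ≠ 0 := Nat.cast_ne_zero.mp ((one_div_pos.mpr hθ').trans hd).ne'
  have hdθ : d * (θ - 1) < -1 := by linarith [(div_lt_iff₀ hθ').mp hd]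
  have hpow := ae_tendsto_pow_zero_of_eLpNorm_le_rpow (X := fun n ω => S n ω / n - μ) hp hdθ
    (fun n hn => ((hS n hn).aemeasurable.div_const _).aestronglyMeasurable.sub
      aestronglyMeasurable_const)
    fun n hn => eLpNorm_div_natCast_sub_le_rpow hn (hC n hn)
  filter_upwards [hpow, hmono] with ω hω hmonoω
  refine tendsto_div_of_monotone_of_tendsto_div_pow hd0 hmonoω ?_
  simpa only [Nat.cast_pow] using tendsto_sub_nhds_zero_iff.mp hω

theorem tendsto_measure_exists_ge_lt_dist_of_ae_tendsto [IsFiniteMeasure P] {ι E : Type*}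
    [SemilatticeSup ι] [Nonempty ι] [Countable ι] [PseudoMetricSpace E] {f : ι → Ω → E}
    {g : Ω → E} (hf : ∀ i, AEStronglyMeasurable (f i) P)
    (hlim : ∀ᵐ ω ∂P, Tendsto (fun i => f i ω) atTop (nhds (g ω))) {δ : ℝ} (hδ : 0 < δ) :
    Tendsto (fun j => P {ω | ∃ i, j ≤ i ∧ δ < dist (f i ω) (g ω)}) atTop (nhds 0) := by
  let tail (j : ι) : Set Ω := {ω | ∃ i, j ≤ i ∧ δ < dist (f i ω) (g ω)}
  have hg : AEStronglyMeasurable g P := aestronglyMeasurable_of_tendsto_ae atTop hf hlim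
  have hmeas (j : ι) : NullMeasurableSet (tail j) P := by
    have htail : tail j = ⋃ i, ⋃ _ : j ≤ i, {ω | δ < dist (f i ω) (g ω)} := by
      ext ω
      simp [tail]
    rw [htail]
    exact .iUnion fun i => .iUnion fun _ =>
      nullMeasurableSet_lt aemeasurable_const ((hf i).dist hg).aemeasurable
  have hanti : Antitone tail := fun _ _ hjk _ ⟨i, hki, hi⟩ => ⟨i, hjk.trans hki, hi⟩
  have hnull : P (⋂ j, tail j) = 0 := by
    refine measure_mono_null ?_ (ae_iff.mp hlim)
    intro ω hω hlimω
    obtain ⟨N, hN⟩ := Metric.tendsto_atTop.mp hlimω δ hδ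
    obtain ⟨i, hNi, hi⟩ := Set.mem_iInter.mp hω N
    exact (hN i hNi).not_gt hi
  rw [← hnull]
  exact tendsto_measure_iInter_atTop hmeas hanti ⟨Classical.arbitrary ι, measure_ne_top P _⟩

theorem ratio_tendsto_one_in_probability_and_ae_general [IsFiniteMeasure P] {S : ℕ → Ω → ℝ}
    {μ C θ : ℝ} (hμ : μ ≠ 0) (hθ : θ < 1) (hmono : ∀ᵐ ω ∂P, Monotone fun k => S k ω)
    (hint : ∀ n, 1 ≤ n → Integrable (S n) P)
    (hC : ∀ n : ℕ, 1 ≤ n → ∫ ω, |S n ω - n * μ| ∂P ≤ C * (n : ℝ) ^ θ) :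
    (∀ δ : ℝ, 0 < δ →
      Tendsto (fun k₀ : ℕ => P {ω | ∃ k : ℕ, k₀ ≤ k ∧ δ < |S k ω / (k * μ) - 1|})
        atTop (nhds 0)) ∧
    (∀ᵐ ω ∂P, Tendsto (fun k : ℕ => S k ω / (k * μ)) atTop (nhds 1)) := by
  have hL1 (n : ℕ) (hn : 1 ≤ n) :
      eLpNorm (fun ω => S n ω - n * μ) 1 P ≤ ENNReal.ofReal (C * (n : ℝ) ^ θ) := by
    have hdiff : Integrable (fun ω => S n ω - n * μ) P := (hint n hn).sub (integrable_const _)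
    rw [eLpNorm_one_eq_lintegral_enorm, ← ofReal_integral_norm_eq_lintegral_enorm hdiff]
    exact ENNReal.ofReal_le_ofReal (hC n hn)
  have hae : ∀ᵐ ω ∂P, Tendsto (fun k : ℕ => S k ω / (k * μ)) atTop (nhds 1) := by
    filter_upwards [ae_tendsto_div_natCast_of_monotone_of_eLpNorm_le_rpow le_rfl hθ hmono
      (fun n hn => (hint n hn).aestronglyMeasurable) hL1] with ω hω
    simpa only [div_div, div_self hμ] using hω.div_const μ
  have hmeas (k : ℕ) : AEStronglyMeasurable (fun ω => S k ω / (k * μ)) P := by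
    rcases Nat.eq_zero_or_pos k with rfl | hk
    -- Junk value: the ratio at `k = 0` is `S 0 ω / 0 = 0`.
    · simpa using aestronglyMeasurable_const
    · exact ((hint k hk).div_const _).aestronglyMeasurable
  exact ⟨fun δ hδ => tendsto_measure_exists_ge_lt_dist_of_ae_tendsto hmeas hae hδ, hae⟩

end AlmostEverywhere

/-- If `{S_k}` is a nondecreasing sequence of positive random variables, `μ > 0`, and
`sup_n E|S_n − nμ|/√n < ∞`, then `max_{k ≥ k₀} |S_k/(kμ) − 1| → 0` in probability as
`k₀ → ∞`, and consequently `S_k/(kμ) → 1` almost surely. -/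
theorem ratio_tendsto_one_in_probability_and_ae {Ω : Type*} [MeasurableSpace Ω]
    (P : Measure Ω) [IsProbabilityMeasure P] (S : ℕ → Ω → ℝ) (μ : ℝ) (hμ : 0 < μ)
    (hmeas : ∀ k, Measurable (S k))
    (hpos : ∀ (k : ℕ) (ω : Ω), 1 ≤ k → 0 < S k ω)
    (hmono : ∀ ω, Monotone fun k => S k ω)
    (hC : ∃ C₀ : ℝ, ∀ n : ℕ, 1 ≤ n → Integrable (S n) P ∧
      (∫ ω, |S n ω - (n : ℝ) * μ| ∂P) ≤ C₀ * Real.sqrt n) :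
    (∀ δ : ℝ, 0 < δ →
      Tendsto (fun k₀ : ℕ => P {ω | ∃ k : ℕ, k₀ ≤ k ∧ δ < |S k ω / ((k : ℝ) * μ) - 1|})
        atTop (nhds 0)) ∧
    (∀ᵐ ω ∂P, Tendsto (fun k : ℕ => S k ω / ((k : ℝ) * μ)) atTop (nhds 1)) := by
  obtain ⟨C, hC⟩ := hC
  exact ratio_tendsto_one_in_probability_and_ae_general hμ.ne' one_half_lt_one (ae_of_all P hmono)
    (fun n hn => (hC n hn).1) fun n hn => Real.sqrt_eq_rpow n ▸ (hC n hn).2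
end

section
/- Let F be the set of all absolutely continuous functions f on [0,1] with f(0) = 0 and ∫_0^1 (f′(u))^2 du ≤ 1. Then for every f ∈ F and every t ∈ (0,1], one has ∫_0^t (f(u)/u) du ≤ √(2t); in particular, sup_{f ∈ F} sup_{0 ≤ t ≤ 1} ∫_0^t (f(u)/u) du ≤ √2. -/
/-!
With `f = ∫ g`, Tonelli's theorem turns the average `∫_0^t |f(u)| / u du` into an integral of `|g|`
against the kernel `∫_s^t du / u = log (t / s)`, and Hölder's inequality separates the two factors.
The substitution `s = t e^{-x}` evaluates the norm of the kernel: the integral of `log (t / s) ^ q`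
over `(0, t]` is `t Γ(q + 1)`, that is `2 t` for `q = 2`.
-/

open MeasureTheory

/-- The Strassen set: all functions `f` on `[0,1]` with `f(0) = 0` that are absolutely
continuous with a derivative `g` lying in the unit ball of `L²[0,1]`, i.e.
`f t = ∫_0^t g(u) du` for `t ∈ [0,1]` and `∫_0^1 g(u)² du ≤ 1`. -/
def StrassenSet : Set (ℝ → ℝ) :=
  {f | ∃ g : ℝ → ℝ, IntegrableOn g (Set.Icc 0 1) volume ∧
    IntegrableOn (fun u => (g u) ^ 2) (Set.Icc 0 1) volume ∧
    (∫ u in Set.Icc (0:ℝ) 1, (g u) ^ 2) ≤ 1 ∧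
    ∀ t ∈ Set.Icc (0:ℝ) 1, f t = ∫ u in Set.Ioc (0:ℝ) t, g u}

theorem setLIntegral_Ioc_Ioc_swap {α : Type*} [LinearOrder α] [TopologicalSpace α]
    [OrderClosedTopology α] [SecondCountableTopology α] [MeasurableSpace α]
    [OpensMeasurableSpace α] {μ ν : Measure α} [SFinite μ] [SFinite ν] {a b : α}
    {F : α → α → ENNReal} (hF : AEMeasurable (Function.uncurry F)
      ((μ.restrict (Set.Ioc a b)).prod (ν.restrict (Set.Ioc a b)))) :
    ∫⁻ u in Set.Ioc a b, ∫⁻ s in Set.Ioc a u, F u s ∂ν ∂μ =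
      ∫⁻ s in Set.Ioc a b, ∫⁻ u in Set.Icc s b, F u s ∂μ ∂ν := by
  let K : α → α → ENNReal := fun u s =>
    {p : α × α | p.2 ≤ p.1}.indicator (Function.uncurry F) (u, s)
  have hK : AEMeasurable (Function.uncurry K)
      ((μ.restrict (Set.Ioc a b)).prod (ν.restrict (Set.Ioc a b))) :=
    hF.indicator (measurableSet_le measurable_snd measurable_fst)
  have inner_left : ∀ u ∈ Set.Ioc a b,
      ∫⁻ s in Set.Ioc a u, F u s ∂ν = ∫⁻ s in Set.Ioc a b, K u s ∂ν := by
    intro u hu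
    have hset : Set.Iic u ∩ Set.Ioc a b = Set.Ioc a u := by
      rw [Set.inter_comm, Set.Ioc_inter_Iic, min_eq_right hu.2]
    rw [← hset, ← setLIntegral_indicator measurableSet_Iic]
    rfl
  have inner_right : ∀ s ∈ Set.Ioc a b,
      ∫⁻ u in Set.Ioc a b, K u s ∂μ = ∫⁻ u in Set.Icc s b, F u s ∂μ := by
    intro s hs
    have hset : Set.Ici s ∩ Set.Ioc a b = Set.Icc s b := by
      ext u
      exact ⟨fun hu => ⟨hu.1, hu.2.2⟩, fun hu => ⟨hu.1, hs.1.trans_le hu.1, hu.2⟩⟩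
    rw [← hset, ← setLIntegral_indicator measurableSet_Ici]
    rfl
  rw [setLIntegral_congr_fun measurableSet_Ioc inner_left, lintegral_lintegral_swap hK,
    setLIntegral_congr_fun measurableSet_Ioc inner_right]

theorem setLIntegral_Icc_inv {s t : ℝ} (hs : 0 < s) (hst : s ≤ t) :
    ∫⁻ u in Set.Icc s t, ENNReal.ofReal u⁻¹ = ENNReal.ofReal (Real.log (t / s)) := by
  have hint : IntegrableOn (fun u : ℝ => u⁻¹) (Set.Icc s t) :=
    (continuousOn_inv₀.mono fun u hu => (hs.trans_le hu.1).ne').integrableOn_Icc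
  have hpos : 0 ≤ᵐ[volume.restrict (Set.Icc s t)] fun u : ℝ => u⁻¹ :=
    ae_restrict_of_forall_mem measurableSet_Icc fun u hu => inv_nonneg.2 (hs.le.trans hu.1)
  rw [← ofReal_integral_eq_lintegral_ofReal hint hpos, integral_Icc_eq_integral_Ioc,
    ← intervalIntegral.integral_of_le hst, integral_inv_of_pos hs (hs.trans_le hst)]

theorem setLIntegral_inv_mul_setLIntegral_eq_log_mul {t : ℝ} {h : ℝ → ENNReal}
    (hh : AEMeasurable h (volume.restrict (Set.Ioc 0 t))) :
    ∫⁻ u in Set.Ioc 0 t, ENNReal.ofReal u⁻¹ * ∫⁻ s in Set.Ioc 0 u, h s =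
      ∫⁻ s in Set.Ioc 0 t, ENNReal.ofReal (Real.log (t / s)) * h s := by
  have hmeas : AEMeasurable (Function.uncurry fun u s : ℝ => ENNReal.ofReal u⁻¹ * h s)
      ((volume.restrict (Set.Ioc 0 t)).prod (volume.restrict (Set.Ioc 0 t))) :=
    measurable_fst.inv.ennreal_ofReal.aemeasurable.mul hh.comp_snd
  calc ∫⁻ u in Set.Ioc 0 t, ENNReal.ofReal u⁻¹ * ∫⁻ s in Set.Ioc 0 u, h s
    _ = ∫⁻ u in Set.Ioc 0 t, ∫⁻ s in Set.Ioc 0 u, ENNReal.ofReal u⁻¹ * h s := by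
      simp only [lintegral_const_mul' _ _ ENNReal.ofReal_ne_top]
    _ = ∫⁻ s in Set.Ioc 0 t, ∫⁻ u in Set.Icc s t, ENNReal.ofReal u⁻¹ * h s :=
      setLIntegral_Ioc_Ioc_swap hmeas
    _ = ∫⁻ s in Set.Ioc 0 t, ENNReal.ofReal (Real.log (t / s)) * h s :=
      setLIntegral_congr_fun measurableSet_Ioc fun s hs => by
        rw [lintegral_mul_const _ measurable_inv.ennreal_ofReal, setLIntegral_Icc_inv hs.1 hs.2]

theorem image_mul_exp_neg_Ioi {t : ℝ} (ht : 0 < t) :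
    (fun x => t * Real.exp (-x)) '' Set.Ioi 0 = Set.Ioo 0 t := by
  ext s
  constructor
  · rintro ⟨x, hx, rfl⟩
    exact ⟨by positivity, mul_lt_of_lt_one_right ht (Real.exp_lt_one_iff.2 (neg_neg_of_pos hx))⟩
  · rintro ⟨hs, hst⟩
    refine ⟨Real.log (t / s), Real.log_pos ((one_lt_div hs).2 hst), ?_⟩
    simp only [← Real.log_inv, inv_div, Real.exp_log (div_pos hs ht), mul_div_cancel₀ s ht.ne']

theorem setLIntegral_exp_neg_mul_rpow {q : ℝ} (hq : -1 < q) :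
    ∫⁻ x in Set.Ioi 0, ENNReal.ofReal (Real.exp (-x)) * ENNReal.ofReal x ^ q =
      ENNReal.ofReal (Real.Gamma (q + 1)) := by
  have hq' : 0 < q + 1 := by linarith
  have hpos : 0 ≤ᵐ[volume.restrict (Set.Ioi 0)] fun x => Real.exp (-x) * x ^ (q + 1 - 1) :=
    ae_restrict_of_forall_mem measurableSet_Ioi fun x hx =>
      mul_nonneg (Real.exp_nonneg _) (Real.rpow_nonneg (le_of_lt hx) _)
  rw [Real.Gamma_eq_integral hq',
    ofReal_integral_eq_lintegral_ofReal (Real.GammaIntegral_convergent hq') hpos]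
  refine setLIntegral_congr_fun measurableSet_Ioi fun x hx => ?_
  simp only [add_sub_cancel_right, ENNReal.ofReal_mul (Real.exp_nonneg _),
    ENNReal.ofReal_rpow_of_pos (Set.mem_Ioi.1 hx)]

theorem setLIntegral_log_div_rpow {q : ℝ} (hq : -1 < q) (t : ℝ) :
    ∫⁻ s in Set.Ioc 0 t, ENNReal.ofReal (Real.log (t / s)) ^ q =
      ENNReal.ofReal (t * Real.Gamma (q + 1)) := by
  rcases le_or_gt t 0 with ht | ht
  · have hΓ : 0 ≤ Real.Gamma (q + 1) := Real.Gamma_nonneg_of_nonneg (by linarith)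
    rw [Set.Ioc_eq_empty ht.not_gt, setLIntegral_empty,
      ENNReal.ofReal_of_nonpos (mul_nonpos_of_nonpos_of_nonneg ht hΓ)]
  have hderiv : ∀ x ∈ Set.Ioi (0 : ℝ),
      HasDerivWithinAt (fun x => t * Real.exp (-x)) (-(t * Real.exp (-x))) (Set.Ioi 0) x := by
    intro x _
    simpa using (((hasDerivAt_neg x).exp).const_mul t).hasDerivWithinAt
  have hinj : Set.InjOn (fun x => t * Real.exp (-x)) (Set.Ioi 0) := fun x _ y _ hxy =>
    neg_injective (Real.exp_injective (mul_left_cancel₀ ht.ne' hxy))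
  have hlog (x : ℝ) : Real.log (t / (t * Real.exp (-x))) = x := by
    rw [div_mul_cancel_left₀ ht.ne', ← Real.exp_neg, neg_neg, Real.log_exp]
  calc ∫⁻ s in Set.Ioc 0 t, ENNReal.ofReal (Real.log (t / s)) ^ q
    _ = ∫⁻ s in Set.Ioo 0 t, ENNReal.ofReal (Real.log (t / s)) ^ q :=
      (setLIntegral_congr Ioo_ae_eq_Ioc).symm
    _ = ∫⁻ x in Set.Ioi 0, ENNReal.ofReal t *
          (ENNReal.ofReal (Real.exp (-x)) * ENNReal.ofReal x ^ q) := by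
      rw [← image_mul_exp_neg_Ioi ht,
        lintegral_image_eq_lintegral_abs_deriv_mul measurableSet_Ioi hderiv hinj]
      simp only [hlog, abs_neg, abs_mul, abs_of_pos ht, Real.abs_exp, ENNReal.ofReal_mul ht.le,
        mul_assoc]
    _ = ENNReal.ofReal (t * Real.Gamma (q + 1)) := by
      rw [lintegral_const_mul' _ _ ENNReal.ofReal_ne_top, setLIntegral_exp_neg_mul_rpow hq,
        ENNReal.ofReal_mul ht.le]

theorem setLIntegral_inv_mul_setLIntegral_le {p q : ℝ} (hpq : p.HolderConjugate q) {t : ℝ}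
    {h : ℝ → ENNReal} (hh : AEMeasurable h (volume.restrict (Set.Ioc 0 t))) :
    ∫⁻ u in Set.Ioc 0 t, ENNReal.ofReal u⁻¹ * ∫⁻ s in Set.Ioc 0 u, h s ≤
      ENNReal.ofReal (t * Real.Gamma (q + 1)) ^ (1 / q) *
        (∫⁻ s in Set.Ioc 0 t, h s ^ p) ^ (1 / p) := by
  have hlog : Measurable fun s => ENNReal.ofReal (Real.log (t / s)) := by fun_prop
  rw [setLIntegral_inv_mul_setLIntegral_eq_log_mul hh,
    ← setLIntegral_log_div_rpow (neg_one_lt_zero.trans hpq.symm.pos) t]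
  exact ENNReal.lintegral_mul_le_Lp_mul_Lq _ hpq.symm hlog.aemeasurable hh

theorem strassenSet_integral_div_le_general {E : Type*} [NormedAddCommGroup E] [NormedSpace ℝ E]
    {p q : ℝ} (hpq : p.HolderConjugate q) {t : ℝ} {f g : ℝ → E}
    (hg : AEStronglyMeasurable g (volume.restrict (Set.Ioc 0 t)))
    (hf : ∀ u ∈ Set.Ioc 0 t, f u = ∫ s in Set.Ioc 0 u, g s) :
    ∫⁻ u in Set.Ioc 0 t, ‖u⁻¹ • f u‖ₑ ≤
      ENNReal.ofReal (t * Real.Gamma (q + 1)) ^ (1 / q) *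
        (∫⁻ s in Set.Ioc 0 t, ‖g s‖ₑ ^ p) ^ (1 / p) := by
  refine le_trans (setLIntegral_mono' measurableSet_Ioc fun u hu => ?_)
    (setLIntegral_inv_mul_setLIntegral_le hpq hg.enorm)
  rw [enorm_smul, Real.enorm_of_nonneg (inv_nonneg.2 hu.1.le), hf u hu]
  gcongr
  exact enorm_integral_le_lintegral_enorm g

theorem lintegral_enorm_rpow_two {α : Type*} [MeasurableSpace α] {μ : Measure α} {g : α → ℝ}
    (hg : Integrable (fun x => g x ^ 2) μ) :
    ∫⁻ x, ‖g x‖ₑ ^ (2 : ℝ) ∂μ = ENNReal.ofReal (∫ x, g x ^ 2 ∂μ) := by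
  rw [ofReal_integral_eq_lintegral_ofReal hg (Filter.Eventually.of_forall fun x => sq_nonneg (g x))]
  simp only [ENNReal.rpow_two, ← enorm_pow, Real.enorm_of_nonneg (sq_nonneg _)]

theorem StrassenSet.lintegral_enorm_div_le {f : ℝ → ℝ} (hf : f ∈ StrassenSet) {t : ℝ}
    (ht : t ∈ Set.Icc 0 1) : ∫⁻ u in Set.Ioc 0 t, ‖f u / u‖ₑ ≤ ENNReal.ofReal √(2 * t) := by
  obtain ⟨g, hg, hg2, hg_le, hfg⟩ := hf
  have hsub : Set.Ioc 0 t ⊆ Set.Icc 0 1 := fun u hu => ⟨hu.1.le, hu.2.trans ht.2⟩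
  have hg_norm : ∫⁻ s in Set.Ioc 0 t, ‖g s‖ₑ ^ (2 : ℝ) ≤ 1 := calc
    _ ≤ ∫⁻ s in Set.Icc 0 1, ‖g s‖ₑ ^ (2 : ℝ) := lintegral_mono_set hsub
    _ = ENNReal.ofReal (∫ s in Set.Icc 0 1, g s ^ 2) := lintegral_enorm_rpow_two hg2
    _ ≤ 1 := ENNReal.ofReal_le_one.2 hg_le
  have hΓ : Real.Gamma (2 + 1) = 2 := by
    rw [Real.Gamma_add_one two_ne_zero, Real.Gamma_two, mul_one]
  calc ∫⁻ u in Set.Ioc 0 t, ‖f u / u‖ₑ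
    _ = ∫⁻ u in Set.Ioc 0 t, ‖u⁻¹ • f u‖ₑ := by simp only [div_eq_inv_mul, smul_eq_mul]
    _ ≤ ENNReal.ofReal (t * Real.Gamma (2 + 1)) ^ (1 / 2 : ℝ) *
          (∫⁻ s in Set.Ioc 0 t, ‖g s‖ₑ ^ (2 : ℝ)) ^ (1 / 2 : ℝ) :=
      strassenSet_integral_div_le_general .two_two (hg.mono_set hsub).aestronglyMeasurable
        fun u hu => hfg u (hsub hu)
    _ ≤ ENNReal.ofReal (t * Real.Gamma (2 + 1)) ^ (1 / 2 : ℝ) :=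
      mul_le_of_le_one_right' (ENNReal.rpow_le_one hg_norm one_half_pos.le)
    _ = ENNReal.ofReal √(2 * t) := by
      rw [hΓ, mul_comm, Real.sqrt_eq_rpow,
        ENNReal.ofReal_rpow_of_nonneg (mul_nonneg zero_le_two ht.1) one_half_pos.le]

/-- For every `f` in the Strassen set and `t ∈ (0,1]`, `∫_0^t f(u)/u du ≤ √(2t)`;
in particular this integral is at most `√2` for every `t ∈ [0,1]`. -/
theorem strassenSet_integral_div_le (f : ℝ → ℝ) (hf : f ∈ StrassenSet) :
    (∀ t ∈ Set.Ioc (0:ℝ) 1, (∫ u in Set.Ioc (0:ℝ) t, f u / u) ≤ Real.sqrt (2 * t)) ∧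
    (∀ t ∈ Set.Icc (0:ℝ) 1, (∫ u in Set.Ioc (0:ℝ) t, f u / u) ≤ Real.sqrt 2) := by
  have key {t : ℝ} (ht : t ∈ Set.Icc (0:ℝ) 1) : ∫ u in Set.Ioc 0 t, f u / u ≤ √(2 * t) :=
    (ENNReal.ofReal_le_ofReal_iff (Real.sqrt_nonneg _)).1 <| calc
      _ ≤ ‖∫ u in Set.Ioc 0 t, f u / u‖ₑ := Real.ofReal_le_enorm _
      _ ≤ ∫⁻ u in Set.Ioc 0 t, ‖f u / u‖ₑ := enorm_integral_le_lintegral_enorm _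
      _ ≤ ENNReal.ofReal √(2 * t) := StrassenSet.lintegral_enorm_div_le hf ht
  exact ⟨fun t ht => key (Set.Ioc_subset_Icc_self ht),
    fun t ht => (key ht).trans (Real.sqrt_le_sqrt (by linarith [ht.2]))⟩
end

section
/- Define f(t) = (t − t·log t)/√2 for t ∈ (0,1] and f(0) = 0, where log is the natural logarithm. Then f is absolutely continuous on [0,1] with f(0) = 0 and ∫_0^1 (f′(u))^2 du ≤ 1 (i.e., f belongs to the Strassen set F), and ∫_0^1 (f(u)/u) du = (1/√2) ∫_0^1 (1 − log u) du = √2. Consequently, sup_{f ∈ F} ∫_0^1 (f(u)/u) du ≥ √2. -/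
/-!
The function `f t = (t - t log t) / √2` is the primitive of `-log / √2` vanishing at `0`, and it
lies in the Strassen set because `∫₀¹ log² = 2`. The supremum is bounded below by the value of the
functional at `f` only once the functional is known to be bounded on the Strassen set (the real
`sSup` of an unbounded set is `0`). By Cauchy-Schwarz every `h` in the Strassen set satisfies
`|h t| ≤ √t`, so `|h u / u|` is dominated by the integrable function `u ^ (-1/2)`.
-/

open MeasureTheory

section CauchySchwarz

variable {α E : Type*} [MeasurableSpace α] {μ : Measure α} [IsFiniteMeasure μ]
  [NormedAddCommGroup E] [NormedSpace ℝ E] {f : α → E}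

lemma norm_integral_le_sqrt_measureReal_mul_sqrt (hf : MemLp f 2 μ) :
    ‖∫ x, f x ∂μ‖ ≤ √(μ.real Set.univ) * √(∫ x, ‖f x‖ ^ 2 ∂μ) := by
  have hHolder := integral_mul_norm_le_Lp_mul_Lq (μ := μ) (f := fun _ => (1 : ℝ))
    (g := fun x => ‖f x‖) Real.HolderConjugate.two_two (memLp_const 1) (by simpa using hf.norm)
  calc ‖∫ x, f x ∂μ‖ ≤ ∫ x, ‖f x‖ ∂μ := norm_integral_le_integral_norm f
    _ ≤ √(μ.real Set.univ) * √(∫ x, ‖f x‖ ^ 2 ∂μ) := by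
      simpa [Real.sqrt_eq_rpow] using hHolder

end CauchySchwarz

section LogSq

lemma hasDerivAt_mul_log_sq_sub {x : ℝ} (hx : x ≠ 0) :
    HasDerivAt (fun u => u * Real.log u ^ 2 - 2 * (u * Real.log u) + 2 * u)
      (Real.log x ^ 2) x := by
  have hsq : HasDerivAt (fun u => u * Real.log u ^ 2) (Real.log x ^ 2 + 2 * Real.log x) x := by
    refine ((hasDerivAt_id x).mul ((Real.hasDerivAt_log hx).pow 2)).congr_deriv ?_
    simp only [Pi.pow_apply, one_mul, id_eq, Nat.cast_ofNat, Nat.add_one_sub_one, pow_one,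
      add_right_inj]
    field_simp
  refine ((hsq.sub ((Real.hasDerivAt_mul_log hx).const_mul 2)).add
    ((hasDerivAt_id x).const_mul 2)).congr_deriv ?_
  ring

-- Turns continuity of `x log² x` at `0` into continuity of `y log y` at `y = √|x|`.
lemma abs_mul_log_sq (x : ℝ) : |x * Real.log x ^ 2| = 4 * (√|x| * Real.log √|x|) ^ 2 := by
  rw [Real.log_sqrt (abs_nonneg x), Real.log_abs, mul_pow, Real.sq_sqrt (abs_nonneg x),
    abs_mul, abs_sq]
  ring

lemma continuous_mul_log_sq : Continuous fun x : ℝ => x * Real.log x ^ 2 := by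
  refine continuous_iff_continuousAt.2 fun x => ?_
  rcases eq_or_ne x 0 with rfl | hx
  · have hcont : Continuous fun x : ℝ => 4 * (√|x| * Real.log √|x|) ^ 2 :=
      ((Real.continuous_mul_log.comp (Real.continuous_sqrt.comp continuous_abs)).pow 2).const_mul 4
    have hlim : Filter.Tendsto (fun x : ℝ => |x * Real.log x ^ 2|) (nhds 0) (nhds 0) := by
      simp only [abs_mul_log_sq]
      simpa using hcont.tendsto 0
    simpa [ContinuousAt] using (tendsto_zero_iff_abs_tendsto_zero _).2 hlim
  · exact continuousAt_id.mul ((Real.continuousAt_log hx).pow 2)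

lemma continuous_mul_log_sq_sub :
    Continuous fun u : ℝ => u * Real.log u ^ 2 - 2 * (u * Real.log u) + 2 * u :=
  (continuous_mul_log_sq.sub (Real.continuous_mul_log.const_mul 2)).add (continuous_id.const_mul 2)

lemma intervalIntegrable_log_sq {a b : ℝ} :
    IntervalIntegrable (fun u => Real.log u ^ 2) volume a b := by
  refine intervalIntegrable_of_even (fun u => by rw [Real.log_neg_eq_log]) fun x hx => ?_
  refine intervalIntegral.intervalIntegrable_deriv_of_nonneg continuous_mul_log_sq_sub.continuousOn
    (fun u hu => hasDerivAt_mul_log_sq_sub ?_) fun u _ => sq_nonneg _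
  exact ((le_min le_rfl hx.le).trans_lt hu.1).ne'

lemma integral_log_sq (a b : ℝ) :
    ∫ u in a..b, Real.log u ^ 2 =
      (b * Real.log b ^ 2 - 2 * (b * Real.log b) + 2 * b) -
        (a * Real.log a ^ 2 - 2 * (a * Real.log a) + 2 * a) :=
  integral_eq_of_hasDerivAt_off_countable _ _ (Set.countable_singleton 0)
    continuous_mul_log_sq_sub.continuousOn (fun _ hx => hasDerivAt_mul_log_sq_sub hx.2)
    intervalIntegrable_log_sq

end LogSq

lemma integral_one_sub_log (a b : ℝ) :
    ∫ u in a..b, (1 - Real.log u) =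
      (2 * b - b * Real.log b) - (2 * a - a * Real.log a) := by
  rw [intervalIntegral.integral_sub intervalIntegrable_const
    intervalIntegral.intervalIntegrable_log', integral_log, intervalIntegral.integral_const]
  simp only [smul_eq_mul]
  ring

lemma setIntegral_sub_mul_log_div_div_self (b c : ℝ) :
    ∫ u in Set.Ioc 0 b, (u - u * Real.log u) / c / u =
      (1 / c) * ∫ u in Set.Ioc 0 b, (1 - Real.log u) := by
  rw [← integral_const_mul]
  refine setIntegral_congr_fun measurableSet_Ioc fun u hu => ?_
  have hu0 : u ≠ 0 := hu.1.ne'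
  field_simp

lemma integral_sub_mul_log_div_sqrt_two_div_self :
    ∫ u in Set.Ioc (0 : ℝ) 1, (u - u * Real.log u) / √2 / u = √2 := by
  rw [setIntegral_sub_mul_log_div_div_self, ← intervalIntegral.integral_of_le zero_le_one,
    integral_one_sub_log]
  simp [← div_eq_inv_mul]

lemma mem_strassenSet_of_eq_intervalIntegral {f g : ℝ → ℝ}
    (hg : IntervalIntegrable g volume 0 1)
    (hg_sq : IntervalIntegrable (fun u => g u ^ 2) volume 0 1)
    (hg_le : ∫ u in 0..1, g u ^ 2 ≤ 1)
    (hfg : ∀ t ∈ Set.Icc (0 : ℝ) 1, f t = ∫ u in 0..t, g u) : f ∈ StrassenSet := by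
  rw [intervalIntegrable_iff_integrableOn_Icc_of_le zero_le_one] at hg hg_sq
  rw [intervalIntegral.integral_of_le zero_le_one, ← integral_Icc_eq_integral_Ioc] at hg_le
  exact ⟨g, hg, hg_sq, hg_le, fun t ht => by rw [hfg t ht, intervalIntegral.integral_of_le ht.1]⟩

lemma sub_mul_log_div_sqrt_two_mem_strassenSet :
    (fun t => (t - t * Real.log t) / √2) ∈ StrassenSet := by
  have hsq : (fun u => (-Real.log u / √2) ^ 2) = fun u => Real.log u ^ 2 / 2 := by
    funext u
    rw [div_pow, neg_sq, Real.sq_sqrt zero_le_two]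
  refine mem_strassenSet_of_eq_intervalIntegral (g := fun u => -Real.log u / √2)
    (intervalIntegral.intervalIntegrable_log'.neg.div_const √2) ?_ ?_ fun t _ => ?_
  · rw [hsq]
    exact intervalIntegrable_log_sq.div_const 2
  · rw [hsq, intervalIntegral.integral_div, integral_log_sq]
    norm_num
  · rw [intervalIntegral.integral_div, intervalIntegral.integral_neg, integral_log]
    ring

lemma abs_le_sqrt_of_mem_strassenSet {f : ℝ → ℝ} (hf : f ∈ StrassenSet) {t : ℝ}
    (ht : t ∈ Set.Icc (0 : ℝ) 1) : |f t| ≤ √t := by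
  obtain ⟨g, hg, hg_sq, hg_le, hfg⟩ := hf
  have hsub : Set.Ioc 0 t ⊆ Set.Icc 0 1 := fun u hu => ⟨hu.1.le, hu.2.trans ht.2⟩
  have hg_memLp : MemLp g 2 (volume.restrict (Set.Ioc 0 t)) :=
    (memLp_two_iff_integrable_sq (hg.mono_set hsub).aestronglyMeasurable).2 (hg_sq.mono_set hsub)
  have henergy : ∫ u in Set.Ioc 0 t, ‖g u‖ ^ 2 ≤ 1 := by
    simp only [Real.norm_eq_abs, sq_abs]
    exact (setIntegral_mono_set hg_sq (.of_forall fun u => sq_nonneg (g u))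
      (.of_forall hsub)).trans hg_le
  calc |f t| = ‖∫ u in Set.Ioc 0 t, g u‖ := by rw [hfg t ht, Real.norm_eq_abs]
    _ ≤ √t * √(∫ u in Set.Ioc 0 t, ‖g u‖ ^ 2) := by
      simpa [ht.1] using norm_integral_le_sqrt_measureReal_mul_sqrt hg_memLp
    _ ≤ √t := mul_le_of_le_one_right (Real.sqrt_nonneg t) (Real.sqrt_le_one.2 henergy)

lemma abs_div_self_le_rpow_of_mem_strassenSet {f : ℝ → ℝ} (hf : f ∈ StrassenSet) {u : ℝ}
    (hu : u ∈ Set.Ioc (0 : ℝ) 1) : |f u / u| ≤ u ^ (-(1 / 2) : ℝ) := by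
  rw [abs_div, abs_of_pos hu.1]
  calc |f u| / u ≤ √u / u := by
        gcongr
        · exact hu.1.le
        · exact abs_le_sqrt_of_mem_strassenSet hf (Set.Ioc_subset_Icc_self hu)
    _ = u ^ (-(1 / 2) : ℝ) := by
        rw [Real.sqrt_div_self, Real.rpow_neg hu.1.le, ← Real.sqrt_eq_rpow]

lemma integral_div_self_le_two_of_mem_strassenSet {f : ℝ → ℝ} (hf : f ∈ StrassenSet) :
    ∫ u in Set.Ioc (0 : ℝ) 1, f u / u ≤ 2 := by
  have hint : IntegrableOn (fun u : ℝ => u ^ (-(1 / 2) : ℝ)) (Set.Ioc 0 1) :=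
    (intervalIntegrable_iff_integrableOn_Ioc_of_le zero_le_one).1
      (intervalIntegral.intervalIntegrable_rpow' (by norm_num))
  calc ∫ u in Set.Ioc (0 : ℝ) 1, f u / u ≤ ‖∫ u in Set.Ioc (0 : ℝ) 1, f u / u‖ :=
        Real.le_norm_self _
    _ ≤ ∫ u in Set.Ioc (0 : ℝ) 1, u ^ (-(1 / 2) : ℝ) :=
        norm_integral_le_of_norm_le hint <| ae_restrict_of_forall_mem measurableSet_Ioc
          fun u hu => abs_div_self_le_rpow_of_mem_strassenSet hf hu
    _ = 2 := by
        rw [← intervalIntegral.integral_of_le zero_le_one, integral_rpow (.inl (by norm_num))]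
        norm_num

lemma bddAbove_integral_div_self_image_strassenSet :
    BddAbove ((fun f : ℝ → ℝ => ∫ u in Set.Ioc (0 : ℝ) 1, f u / u) '' StrassenSet) :=
  ⟨2, Set.forall_mem_image.2 fun _ hf => integral_div_self_le_two_of_mem_strassenSet hf⟩

/-- The function `f(t) = (t − t·log t)/√2` (with `f(0) = 0`) belongs to the Strassen set,
`∫_0^1 f(u)/u du = (1/√2) ∫_0^1 (1 − log u) du = √2`, and consequently
`sup_{f ∈ F} ∫_0^1 f(u)/u du ≥ √2`. -/
theorem strassenSet_integral_div_sup_ge :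
    (fun t : ℝ => if t = 0 then 0 else (t - t * Real.log t) / Real.sqrt 2) ∈ StrassenSet ∧
    (∫ u in Set.Ioc (0:ℝ) 1, ((u - u * Real.log u) / Real.sqrt 2) / u)
      = (1 / Real.sqrt 2) * ∫ u in Set.Ioc (0:ℝ) 1, (1 - Real.log u) ∧
    (∫ u in Set.Ioc (0:ℝ) 1, ((u - u * Real.log u) / Real.sqrt 2) / u) = Real.sqrt 2 ∧
    Real.sqrt 2 ≤ sSup ((fun f : ℝ → ℝ => ∫ u in Set.Ioc (0:ℝ) 1, f u / u) '' StrassenSet) := by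
  have hite : (fun t : ℝ => if t = 0 then 0 else (t - t * Real.log t) / √2) =
      fun t => (t - t * Real.log t) / √2 := by
    funext t
    split_ifs with ht <;> simp [ht]
  exact ⟨hite ▸ sub_mul_log_div_sqrt_two_mem_strassenSet,
    setIntegral_sub_mul_log_div_div_self 1 √2,
    integral_sub_mul_log_div_sqrt_two_div_self,
    le_csSup bddAbove_integral_div_self_image_strassenSet
      ⟨_, sub_mul_log_div_sqrt_two_mem_strassenSet, integral_sub_mul_log_div_sqrt_two_div_self⟩⟩
end
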